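/- arXiv:1508.07408 — 2 statements merged into one kernel-verified Lean document; each statement's English description precedes it below -/
import Mathlib

section
/- Let α ≥ 1, ν = (1−α)/2 and λ < 0, and define y : (0,∞) → ℝ by y(x) = x^ν · I_{−ν}(x·√|λ|). Then y is twice differentiable on (0,∞), satisfies −(x^α · y'(x))' − λ · x^α · y(x) = 0 for all x ∈ (0,1), y(x) tends to the finite limit (√|λ|/2)^{−ν}/Γ(1−ν) as x → 0+, and y'(x) → 0 as x → 0+ (so y is bounded in a neighbourhood of the origin and satisfies the boundary condition y'(0) = 0). -/
/-- The modified Bessel function of the first kind of real order `μ`,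
`I_μ(x) = ∑ 1/(m!·Γ(m+μ+1))·(x/2)^{2m+μ}` (terms with `Γ` at nonpositive
integers vanish, since `Real.Gamma` vanishes there). -/
noncomputable def besselI (μ x : ℝ) : ℝ :=
  ∑' m : ℕ, (1 / ((m.factorial : ℝ) * Real.Gamma ((m : ℝ) + μ + 1))) *
    (x / 2) ^ (2 * (m : ℝ) + μ)

noncomputable def gcoef (μ : ℝ) (m : ℕ) : ℝ :=
  1 / ((m.factorial : ℝ) * Real.Gamma ((m : ℝ) + μ + 1))

noncomputable def gser (μ t : ℝ) : ℝ := ∑' m : ℕ, gcoef μ m * t ^ m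

lemma gamma_lower (μ : ℝ) (hμ : 0 ≤ μ) (m : ℕ) :
    Real.Gamma (μ + 1) ≤ Real.Gamma ((m : ℝ) + μ + 1) := by
  induction m with
  | zero => simp
  | succ k ih =>
    have h1 : (0 : ℝ) ≤ k := Nat.cast_nonneg k
    have h2 : ((k + 1 : ℕ) : ℝ) + μ + 1 = ((k : ℝ) + μ + 1) + 1 := by push_cast; ring
    have hpos : 0 < Real.Gamma ((k : ℝ) + μ + 1) := Real.Gamma_pos_of_pos (by linarith)
    rw [h2, Real.Gamma_add_one (s := (k : ℝ) + μ + 1) (by linarith)]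
    nlinarith [mul_nonneg (add_nonneg h1 hμ) hpos.le]

lemma gcoef_nonneg (μ : ℝ) (hμ : 0 ≤ μ) (m : ℕ) : 0 ≤ gcoef μ m := by
  have h1 : (0 : ℝ) ≤ m := Nat.cast_nonneg m
  have hpos : 0 < Real.Gamma ((m : ℝ) + μ + 1) := Real.Gamma_pos_of_pos (by linarith)
  unfold gcoef; positivity

lemma gcoef_le (μ : ℝ) (hμ : 0 ≤ μ) (m : ℕ) :
    gcoef μ m ≤ 1 / Real.Gamma (μ + 1) * (1 / (m.factorial : ℝ)) := by
  have hpos : 0 < Real.Gamma (μ + 1) := Real.Gamma_pos_of_pos (by linarith)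
  have h := gamma_lower μ hμ m
  have hf : (0 : ℝ) < m.factorial := by positivity
  unfold gcoef
  rw [one_div_mul_one_div]
  apply one_div_le_one_div_of_le (by positivity)
  rw [mul_comm]
  gcongr

lemma gcoef_succ (μ : ℝ) (m : ℕ) :
    gcoef μ (m + 1) * ((m : ℝ) + 1) = gcoef (μ + 1) m := by
  have hf : (m.factorial : ℝ) ≠ 0 := by positivity
  have hm : (m : ℝ) + 1 ≠ 0 := by positivity
  have h2 : ((m + 1 : ℕ) : ℝ) + μ + 1 = (m : ℝ) + (μ + 1) + 1 := by push_cast; ring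
  unfold gcoef
  rw [h2, Nat.factorial_succ]
  push_cast
  by_cases hg : Real.Gamma ((m : ℝ) + (μ + 1) + 1) = 0
  · simp [hg]
  · field_simp

lemma gser_summable (μ : ℝ) (hμ : 0 ≤ μ) (t : ℝ) :
    Summable (fun m : ℕ => gcoef μ m * t ^ m) := by
  have h := (Real.summable_pow_div_factorial |t|).mul_left (1 / Real.Gamma (μ + 1))
  refine Summable.of_norm_bounded h (fun m => ?_)
  rw [norm_mul, norm_pow, Real.norm_eq_abs, Real.norm_eq_abs, abs_of_nonneg (gcoef_nonneg μ hμ m)]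
  calc _ ≤ (1 / Real.Gamma (μ + 1) * (1 / (m.factorial : ℝ))) * |t| ^ m := by
        gcongr; exact gcoef_le μ hμ m
    _ = _ := by ring

lemma gser_hasDerivAt (μ : ℝ) (hμ : 0 ≤ μ) (t : ℝ) :
    HasDerivAt (gser μ) (gser (μ + 1) t) t := by
  set R : ℝ := |t| + 1 with hR
  have hR0 : 0 < R := by positivity
  have hsum : Summable (fun m : ℕ => gcoef μ m * ((m : ℝ) * R ^ (m - 1))) := by
    rw [← summable_nat_add_iff 1]
    refine (gser_summable (μ + 1) (by linarith) R).congr (fun m => ?_)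
    rw [← gcoef_succ]; simp only [Nat.add_sub_cancel]; push_cast; ring
  have key := hasDerivAt_tsum_of_isPreconnected (𝕜 := ℝ) (F := ℝ)
    (g := fun (m : ℕ) (x : ℝ) => gcoef μ m * x ^ m)
    (g' := fun (m : ℕ) (x : ℝ) => gcoef μ m * ((m : ℝ) * x ^ (m - 1)))
    (t := Metric.ball (0 : ℝ) R) (y₀ := 0) (y := t)
    hsum Metric.isOpen_ball (convex_ball _ _).isPreconnected
    (fun m x _ => (hasDerivAt_pow m x).const_mul _)
    (fun m x hx => by
      have hx' : |x| < R := by simpa using hx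
      rw [norm_mul, norm_mul, norm_pow, Real.norm_eq_abs, Real.norm_eq_abs, Real.norm_eq_abs,
        abs_of_nonneg (gcoef_nonneg μ hμ m), abs_of_nonneg (Nat.cast_nonneg m)]
      have := gcoef_nonneg μ hμ m
      gcongr)
    (by simpa using hR0) (gser_summable μ hμ 0) (by simp [hR])
  have e : ∑' m : ℕ, gcoef μ m * ((m : ℝ) * t ^ (m - 1)) = gser (μ + 1) t := by
    have hs : Summable (fun m : ℕ => gcoef μ m * ((m : ℝ) * t ^ (m - 1))) := by
      rw [← summable_nat_add_iff 1]
      refine (gser_summable (μ + 1) (by linarith) t).congr (fun m => ?_)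
      rw [← gcoef_succ]; simp only [Nat.add_sub_cancel]; push_cast; ring
    rw [hs.tsum_eq_zero_add]
    simp only [CharP.cast_eq_zero, zero_mul, mul_zero, zero_add]
    unfold gser
    refine tsum_congr (fun m => ?_)
    rw [← gcoef_succ]; simp only [Nat.add_sub_cancel]; push_cast; ring
  rw [e] at key
  exact key

lemma gser_rec (μ : ℝ) (hμ : 0 ≤ μ) (t : ℝ) :
    gser μ t = (μ + 1) * gser (μ + 1) t + t * gser (μ + 1 + 1) t := by
  have hs1 := gser_summable (μ + 1) (by linarith) t
  have hs2 := gser_summable (μ + 1 + 1) (by linarith) t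
  have hsn : Summable (fun m : ℕ => (m : ℝ) * (gcoef (μ + 1) m * t ^ m)) := by
    rw [← summable_nat_add_iff 1]
    refine (hs2.mul_left t).congr (fun m => ?_)
    rw [← gcoef_succ (μ + 1)]; push_cast; ring
  have e : t * gser (μ + 1 + 1) t = ∑' m : ℕ, (m : ℝ) * (gcoef (μ + 1) m * t ^ m) := by
    rw [hsn.tsum_eq_zero_add]
    simp only [CharP.cast_eq_zero, zero_mul, zero_add]
    unfold gser
    rw [← tsum_mul_left]
    refine tsum_congr (fun m => ?_)
    rw [← gcoef_succ (μ + 1)]; push_cast; ring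
  rw [e]
  unfold gser
  rw [← tsum_mul_left, ← (hs1.mul_left (μ + 1)).tsum_add hsn]
  refine tsum_congr (fun m => ?_)
  have h1 : (0 : ℝ) ≤ m := Nat.cast_nonneg m
  have hpos : 0 < Real.Gamma ((m : ℝ) + μ + 1) := Real.Gamma_pos_of_pos (by linarith)
  have hf : (m.factorial : ℝ) ≠ 0 := by positivity
  have hc : gcoef μ m = (μ + 1 + m) * gcoef (μ + 1) m := by
    unfold gcoef
    have h2 : (m : ℝ) + (μ + 1) + 1 = ((m : ℝ) + μ + 1) + 1 := by ring
    have h3 : (m : ℝ) + μ + 1 ≠ 0 := by linarith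
    rw [h2, Real.Gamma_add_one h3]
    field_simp
    ring
  rw [hc]; ring

lemma y_eq (μ s x : ℝ) (hs : 0 < s) (hx : 0 < x) :
    x ^ (-μ) * besselI μ (x * s) = (s / 2) ^ μ * gser μ ((s / 2) ^ 2 * x ^ 2) := by
  unfold besselI gser
  rw [← tsum_mul_left, ← tsum_mul_left]
  refine tsum_congr (fun m => ?_)
  have h1 : x * s / 2 = x * (s / 2) := by ring
  have hc : 0 < s / 2 := by positivity
  have h2 : (x * (s / 2)) ^ (2 * (m : ℝ) + μ) = (x * (s / 2)) ^ (2 * m) * (x ^ μ * (s / 2) ^ μ) := by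
    have h5 : (x * (s / 2)) ^ (2 * (m : ℝ)) = (x * (s / 2)) ^ (2 * m) := by
      rw [← Real.rpow_natCast]; push_cast; rfl
    rw [Real.rpow_add (by positivity), h5, Real.mul_rpow hx.le hc.le]
  have h3 : x ^ (-μ) * x ^ μ = 1 := by rw [← Real.rpow_add hx]; simp
  rw [h1, h2, ← mul_pow, ← pow_mul]
  unfold gcoef
  rw [pow_mul, pow_mul] at *
  rw [show (s / 2 * x) = x * (s / 2) by ring]
  linear_combination (1 / ((m.factorial : ℝ) * Real.Gamma ((m : ℝ) + μ + 1)) * ((x * (s / 2)) ^ 2) ^ m * (s / 2) ^ μ) * h3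

theorem bounded_solution_neg_lambda (α lam : ℝ) (hα : 1 ≤ α) (hlam : lam < 0) :
    let ν : ℝ := (1 - α) / 2
    let y : ℝ → ℝ := fun x => x ^ ν * besselI (-ν) (x * Real.sqrt |lam|)
    (∀ x > (0 : ℝ), DifferentiableAt ℝ y x) ∧
    (∀ x > (0 : ℝ), DifferentiableAt ℝ (deriv y) x) ∧
    (∀ x ∈ Set.Ioo (0 : ℝ) 1,
      -(deriv (fun x : ℝ => x ^ α * deriv y x) x) - lam * x ^ α * y x = 0) ∧
    Filter.Tendsto y (nhdsWithin 0 (Set.Ioi 0))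
      (nhds ((Real.sqrt |lam| / 2) ^ (-ν) / Real.Gamma (1 - ν))) ∧
    Filter.Tendsto (deriv y) (nhdsWithin 0 (Set.Ioi 0)) (nhds 0) := by
  intro ν y
  obtain ⟨μ, hμd⟩ : ∃ μ, μ = -ν := ⟨_, rfl⟩
  have hν : ν = -μ := by rw [hμd]; ring
  have hαμ : α = 2 * μ + 1 := by rw [hμd]; simp only [ν]; ring
  have hμ : 0 ≤ μ := by linarith
  obtain ⟨s, hsd⟩ : ∃ s, s = Real.sqrt |lam| := ⟨_, rfl⟩
  have hs : 0 < s := by rw [hsd]; exact Real.sqrt_pos.mpr (abs_pos.mpr hlam.ne)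
  have hs2 : s ^ 2 = -lam := by rw [hsd, Real.sq_sqrt (abs_nonneg _), abs_of_neg hlam]
  obtain ⟨c, hcd⟩ : ∃ c, c = s / 2 := ⟨_, rfl⟩
  have hc2 : 4 * c ^ 2 = -lam := by rw [hcd, ← hs2]; ring
  let Y : ℝ → ℝ := fun x => c ^ μ * gser μ (c ^ 2 * x ^ 2)
  let Y1 : ℝ → ℝ := fun x => c ^ μ * (2 * c ^ 2 * x * gser (μ + 1) (c ^ 2 * x ^ 2))
  have hyY : ∀ x > 0, y x = Y x := by
    intro x hx
    have := y_eq μ s x hs hx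
    simp only [y, Y]
    rw [← hμd, ← hsd, hν, this, hcd]
  have hin : ∀ x : ℝ, HasDerivAt (fun x : ℝ => c ^ 2 * x ^ 2) (c ^ 2 * (2 * x)) x := by
    intro x
    simpa using (hasDerivAt_pow 2 x).const_mul (c ^ 2)
  have hG : ∀ κ ≥ 0, ∀ x : ℝ, HasDerivAt (fun x => gser κ (c ^ 2 * x ^ 2))
      (gser (κ + 1) (c ^ 2 * x ^ 2) * (c ^ 2 * (2 * x))) x := by
    intro κ hκ x
    exact (gser_hasDerivAt κ hκ (c ^ 2 * x ^ 2)).comp x (hin x)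
  have hY : ∀ x, HasDerivAt Y (Y1 x) x := by
    intro x
    refine ((hG μ hμ x).const_mul (c ^ μ)).congr_deriv ?_
    simp only [Y1]; ring
  have hY1 : ∀ x, HasDerivAt Y1 (c ^ μ * (2 * c ^ 2 * gser (μ + 1) (c ^ 2 * x ^ 2) +
      2 * c ^ 2 * x * (gser (μ + 1 + 1) (c ^ 2 * x ^ 2) * (c ^ 2 * (2 * x))))) x := by
    intro x
    have h1 : HasDerivAt (fun x : ℝ => 2 * c ^ 2 * x) (2 * c ^ 2) x := by
      simpa using (hasDerivAt_id x).const_mul (2 * c ^ 2)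
    exact (h1.mul (hG (μ + 1) (by linarith) x)).const_mul (c ^ μ)
  have hev : ∀ x > 0, y =ᶠ[nhds x] Y := fun x hx => by
    filter_upwards [lt_mem_nhds hx] with z hz using hyY z hz
  have hdy : ∀ x > 0, HasDerivAt y (Y1 x) x := fun x hx => (hY x).congr_of_eventuallyEq (hev x hx)
  have hev1 : ∀ x > 0, deriv y =ᶠ[nhds x] Y1 := fun x hx => by
    filter_upwards [lt_mem_nhds hx] with z hz using (hdy z hz).deriv
  refine ⟨fun x hx => (hdy x hx).differentiableAt,
    fun x hx => ((hY1 x).congr_of_eventuallyEq (hev1 x hx)).differentiableAt, ?_, ?_, ?_⟩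
  · rintro x ⟨hx, -⟩
    have hd := (Real.hasDerivAt_rpow_const (x := x) (p := α) (Or.inl hx.ne')).mul
      ((hY1 x).congr_of_eventuallyEq (hev1 x hx))
    have hd' : deriv (fun x : ℝ => x ^ α * deriv y x) x = _ := hd.deriv
    rw [hd', (hdy x hx).deriv, hyY x hx]
    simp only [Y, Y1]
    rw [gser_rec μ hμ (c ^ 2 * x ^ 2)]
    have hp : x ^ α = x ^ (α - 1) * x := by
      rw [Real.rpow_sub_one hx.ne']; field_simp
    rw [hp, show lam = -(4 * c ^ 2) by linarith, hαμ]
    ring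
  · have h := (hY 0).continuousAt.tendsto
    have h0 : Y 0 = (Real.sqrt |lam| / 2) ^ (-ν) / Real.Gamma (1 - ν) := by
      simp only [Y]
      rw [← hμd, ← hsd, ← hcd, hν]
      have : gser μ 0 = 1 / Real.Gamma (μ + 1) := by
        unfold gser
        rw [tsum_eq_single 0 (fun m hm => by simp [hm])]
        simp [gcoef]
      rw [show c ^ 2 * (0 : ℝ) ^ 2 = 0 by ring, this, show 1 - -μ = μ + 1 by ring]
      ring
    rw [h0] at h
    refine (h.mono_left nhdsWithin_le_nhds).congr' ?_
    filter_upwards [self_mem_nhdsWithin] with z hz using (hyY z hz).symm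
  · have h := (hY1 0).continuousAt.tendsto
    have h0 : Y1 0 = 0 := by simp [Y1]
    rw [h0] at h
    refine (h.mono_left nhdsWithin_le_nhds).congr' ?_
    filter_upwards [self_mem_nhdsWithin] with z hz using (hdy z hz).deriv.symm
end

section
/- Let n ≥ 1 be a natural number, let α ∈ (4n−3, 4n−1), set ν = (1−α)/2, and let λ satisfy 0 < λ < j_{ν,1}². Then forerall real numbers r, s₀ with 0 < r ≤ s₀ ≤ 1, J_{−ν}(s₀·√λ)·J_{ν−1}(r·√λ) + J_ν(s₀·√λ)·J_{1−ν}(r·√λ) ≤ 0. -/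
/-- The Bessel function of the first kind of real order `μ`. -/
noncomputable def besselJ (μ x : ℝ) : ℝ :=
  ∑' m : ℕ, ((-1 : ℝ) ^ m / ((m.factorial : ℝ) * Real.Gamma ((m : ℝ) + μ + 1))) *
    (x / 2) ^ (2 * (m : ℝ) + μ)

noncomputable def bc (μ : ℝ) (m : ℕ) : ℝ :=
  (-1 : ℝ) ^ m / ((m.factorial : ℝ) * Real.Gamma ((m : ℝ) + μ + 1))

noncomputable def bphi (μ z : ℝ) : ℝ := ∑' m : ℕ, bc μ m * z ^ m

def NonInt (μ : ℝ) : Prop := ∀ k : ℤ, μ ≠ (k : ℝ)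

lemma NonInt.add {μ : ℝ} (h : NonInt μ) (j : ℤ) : NonInt (μ + j) := by
  intro k hk
  apply h (k - j)
  push_cast
  linarith

lemma NonInt.neg {μ : ℝ} (h : NonInt μ) : NonInt (-μ) := by
  intro k hk
  apply h (-k)
  push_cast
  linarith

lemma NonInt.gamma {μ : ℝ} (h : NonInt μ) : Real.Gamma μ ≠ 0 := by
  apply Real.Gamma_ne_zero
  intro m hm
  apply h (-m)
  push_cast
  exact hm

lemma bc_ne {μ : ℝ} (h : NonInt μ) (m : ℕ) : bc μ m ≠ 0 := by
  unfold bc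
  have h1 : Real.Gamma ((m : ℝ) + μ + 1) ≠ 0 := by
    have := (h.add (m + 1)).gamma
    push_cast at this
    rwa [show (m : ℝ) + μ + 1 = μ + (m + 1) by ring]
  have : (m.factorial : ℝ) ≠ 0 := by positivity
  have h3 : (-1 : ℝ) ^ m ≠ 0 := pow_ne_zero _ (by norm_num)
  exact div_ne_zero h3 (mul_ne_zero this h1)

lemma bc_succ (μ : ℝ) (m : ℕ) : ((m : ℝ) + 1) * bc μ (m + 1) = - bc (μ + 1) m := by
  unfold bc
  rw [Nat.factorial_succ, pow_succ]
  push_cast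
  rw [show (m : ℝ) + 1 + μ + 1 = (m : ℝ) + (μ + 1) + 1 by ring]
  have : (m : ℝ) + 1 ≠ 0 := by positivity
  have h2 : (m.factorial : ℝ) ≠ 0 := by positivity
  by_cases h : Real.Gamma ((m : ℝ) + (μ + 1) + 1) = 0
  · simp [h]
  · field_simp

lemma bc_pred {μ : ℝ} (h : NonInt μ) (m : ℕ) : bc (μ - 1) m = ((m : ℝ) + μ) * bc μ m := by
  unfold bc
  have h0 : NonInt (m + μ) := by
    have := h.add m
    push_cast at this
    rwa [add_comm]
  have h1 : (m : ℝ) + μ ≠ 0 := by simpa using h0 0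
  have hg := h0.gamma
  rw [show (m : ℝ) + (μ - 1) + 1 = m + μ by ring, Real.Gamma_add_one h1]
  have h2 : (m.factorial : ℝ) ≠ 0 := by positivity
  field_simp

lemma bc_summable {μ : ℝ} (h : NonInt μ) (z : ℝ) : Summable fun m => bc μ m * z ^ m := by
  by_cases hz : z = 0
  · subst hz
    apply summable_of_ne_finset_zero (s := {0})
    intro b hb
    have : b ≠ 0 := by simpa using hb
    simp [this]
  apply summable_of_ratio_test_tendsto_lt_one (l := 0) zero_lt_one
  · exact Filter.Eventually.of_forall fun m => mul_ne_zero (bc_ne h m) (pow_ne_zero _ hz)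
  have key : ∀ m : ℕ, ‖bc μ (m + 1) * z ^ (m + 1)‖ / ‖bc μ m * z ^ m‖
      = |z| * (|((m : ℝ) + 1)⁻¹| * |((m : ℝ) + (μ + 1))⁻¹|) := by
    intro m
    have e1 := bc_succ μ m
    have h1 : NonInt (μ + 1) := by simpa using h.add 1
    have e2 := bc_pred h1 m
    rw [show μ + 1 - 1 = μ by ring] at e2
    have hm : (m : ℝ) + 1 ≠ 0 := by positivity
    have hne := bc_ne h m
    have hne2 : (m : ℝ) + (μ + 1) ≠ 0 := by
      intro h0
      rw [h0, zero_mul] at e2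
      exact hne e2
    have : bc μ (m + 1) * z ^ (m + 1) / (bc μ m * z ^ m) =
        - (z * (((m : ℝ) + 1)⁻¹ * ((m : ℝ) + (μ + 1))⁻¹)) := by
      have e3 : bc μ (m + 1) = - bc μ m / (((m : ℝ) + 1) * ((m : ℝ) + (μ + 1))) := by
        rw [eq_div_iff (mul_ne_zero hm hne2), e2]
        linear_combination ((m : ℝ) + (μ + 1)) * e1
      rw [e3]
      have := pow_ne_zero m hz
      field_simp
      ring
    rw [← norm_div, this, norm_neg, Real.norm_eq_abs, abs_mul, abs_mul]
  simp_rw [key]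
  have t1 : Filter.Tendsto (fun m : ℕ => |((m : ℝ) + 1)⁻¹|) Filter.atTop (nhds 0) := by
    have := (tendsto_inv_atTop_zero.comp
      (Filter.tendsto_atTop_add_const_right _ (1 : ℝ) (tendsto_natCast_atTop_atTop (R := ℝ)))).abs
    simpa using this
  have t2 : Filter.Tendsto (fun m : ℕ => |((m : ℝ) + (μ + 1))⁻¹|) Filter.atTop (nhds 0) := by
    have := (tendsto_inv_atTop_zero.comp
      (Filter.tendsto_atTop_add_const_right _ (μ + 1) (tendsto_natCast_atTop_atTop (R := ℝ)))).abs
    simpa using this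
  simpa using (t1.mul t2).const_mul |z|

lemma bphi_hasDerivAt {μ : ℝ} (h : NonInt μ) (z : ℝ) :
    HasDerivAt (bphi μ) (- bphi (μ + 1) z) z := by
  have h1 : NonInt (μ + 1) := by simpa using h.add 1
  set R : ℝ := |z| + 1 with hR
  have hRpos : 0 < R := by positivity
  have main := hasDerivAt_tsum_of_isPreconnected
    (u := fun m : ℕ => ‖(m : ℝ) * bc μ m * R ^ (m - 1)‖)
    (g := fun m y => bc μ m * y ^ m) (g' := fun m y => bc μ m * ((m : ℝ) * y ^ (m - 1)))
    (t := Metric.ball (0 : ℝ) R) (y₀ := z) (y := z) ?_ Metric.isOpen_ball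
    (convex_ball (0 : ℝ) R).isPreconnected ?_ ?_ ?_ (bc_summable h z) ?_
  · have hz : ∀ m : ℕ, bc μ (m + 1) * (((m + 1 : ℕ) : ℝ) * z ^ (m + 1 - 1))
        = -(bc (μ + 1) m * z ^ m) := by
      intro m
      have := bc_succ μ m
      rw [Nat.add_sub_cancel]
      push_cast
      linear_combination (z ^ m) * this
    have e : ∑' m : ℕ, bc μ m * ((m : ℝ) * z ^ (m - 1)) = - bphi (μ + 1) z := by
      have hs : Summable fun m : ℕ => bc μ m * ((m : ℝ) * z ^ (m - 1)) := by
        apply (summable_nat_add_iff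
          (f := fun m : ℕ => bc μ m * ((m : ℝ) * z ^ (m - 1))) 1).1
        exact (bc_summable h1 z).neg.congr fun m => (hz m).symm
      rw [hs.tsum_eq_zero_add]
      unfold bphi
      rw [← tsum_neg, Nat.cast_zero, zero_mul, mul_zero, zero_add]
      exact tsum_congr hz
    rw [← e]
    exact main
  · apply (summable_nat_add_iff (f := fun m : ℕ => ‖(m : ℝ) * bc μ m * R ^ (m - 1)‖) 1).1
    refine (bc_summable h1 R).norm.congr fun m => ?_
    have := bc_succ μ m
    rw [Nat.add_sub_cancel]
    push_cast
    rw [this, neg_mul, norm_neg]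
  · intro m y _
    exact (hasDerivAt_pow m y).const_mul _
  · intro m y hy
    rw [mem_ball_zero_iff] at hy
    have : ‖y‖ ^ (m - 1) ≤ R ^ (m - 1) := pow_le_pow_left₀ (norm_nonneg _) hy.le _
    simp only [norm_mul, norm_pow]
    rw [Real.norm_of_nonneg hRpos.le, ← mul_assoc, mul_comm ‖bc μ m‖]
    gcongr
  · rw [mem_ball_zero_iff, Real.norm_eq_abs]; linarith
  · rw [mem_ball_zero_iff, Real.norm_eq_abs]; linarith

lemma bphi_cont {μ : ℝ} (h : NonInt μ) : Continuous (bphi μ) :=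
  continuous_iff_continuousAt.2 fun z => (bphi_hasDerivAt h z).continuousAt

lemma bphi_rec {μ : ℝ} (h : NonInt μ) (z : ℝ) :
    bphi (μ - 1) z = μ * bphi μ z - z * bphi (μ + 1) z := by
  have h1 : NonInt (μ + 1) := by simpa using h.add 1
  have hp : NonInt (μ - 1) := by simpa [sub_eq_add_neg] using h.add (-1)
  have s0 := bc_summable hp z
  have s1 := bc_summable h z
  have s2 : Summable fun m : ℕ => (m : ℝ) * bc μ m * z ^ m := by
    refine (s0.sub (s1.mul_left μ)).congr fun m => ?_
    rw [bc_pred h]; ring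
  have e : ∑' m : ℕ, (m : ℝ) * bc μ m * z ^ m = - (z * bphi (μ + 1) z) := by
    rw [s2.tsum_eq_zero_add]
    unfold bphi
    rw [← tsum_mul_left, ← tsum_neg]
    simp only [Nat.cast_zero, zero_mul, zero_add]
    apply tsum_congr
    intro m
    have := bc_succ μ m
    push_cast
    rw [this]; ring
  have : bphi (μ - 1) z = ∑' m : ℕ, (m : ℝ) * bc μ m * z ^ m + μ * bphi μ z := by
    unfold bphi
    rw [← tsum_mul_left, ← s2.tsum_add (s1.mul_left μ)]
    apply tsum_congr
    intro m
    rw [bc_pred h]; ring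
  rw [this, e]; ring

lemma bphi_zero (μ : ℝ) : bphi μ 0 = (Real.Gamma (μ + 1))⁻¹ := by
  unfold bphi
  rw [tsum_eq_single 0]
  · simp [bc]
  · intro m hm
    simp [hm]

lemma besselJ_eq (μ x : ℝ) (hx : 0 < x) :
    besselJ μ x = (x / 2) ^ μ * bphi μ ((x / 2) ^ 2) := by
  unfold besselJ bphi
  rw [← tsum_mul_left]
  apply tsum_congr
  intro m
  have hx2 : 0 < x / 2 := by positivity
  rw [Real.rpow_add hx2, ← pow_mul]
  have : (x / 2) ^ (2 * (m : ℝ)) = (x / 2) ^ (2 * m) := by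
    rw [← Real.rpow_natCast]; push_cast; rfl
  rw [this]
  unfold bc
  ring

/-- Constancy of the Wronskian-type combination. -/
lemma wronsk {μ : ℝ} (h : NonInt μ) (z : ℝ) :
    bphi (μ - 1) z * bphi (-μ) z + z * (bphi μ z * bphi (1 - μ) z)
      = (Real.Gamma μ)⁻¹ * (Real.Gamma (1 - μ))⁻¹ := by
  have hp : NonInt (μ - 1) := by simpa [sub_eq_add_neg] using h.add (-1)
  have hn : NonInt (-μ) := h.neg
  have hq : NonInt (1 - μ) := by
    have := hn.add 1
    push_cast at this
    rwa [neg_add_eq_sub] at this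
  have hd : ∀ y, HasDerivAt (fun z => bphi (μ - 1) z * bphi (-μ) z +
      z * (bphi μ z * bphi (1 - μ) z)) 0 y := by
    intro y
    have d1 := bphi_hasDerivAt hp y
    have d2 := bphi_hasDerivAt hn y
    have d3 := bphi_hasDerivAt h y
    have d4 := bphi_hasDerivAt hq y
    have r1 := bphi_rec h y
    have r2 := bphi_rec hq y
    rw [show μ - 1 + 1 = μ by ring] at d1
    rw [show -μ + 1 = 1 - μ by ring] at d2
    rw [show 1 - μ - 1 = -μ by ring] at r2
    refine ((d1.mul d2).add ((hasDerivAt_id y).mul (d3.mul d4))).congr_deriv ?_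
    simp only [id, Pi.mul_apply]
    linear_combination (-bphi (1 - μ) y) * r1 - bphi μ y * r2
  have hc := is_const_of_deriv_eq_zero (fun y => (hd y).differentiableAt)
    (fun y => (hd y).deriv) z 0
  simp only [bphi_zero, zero_mul, add_zero] at hc
  rw [hc]
  congr 3 <;> ring

lemma key_ineq {μ w : ℝ} (h : NonInt μ) (hμ : 0 < μ) (hG : 0 < Real.Gamma (1 - μ))
    (hw : 0 < w) (hz : ∀ t, 0 < t → t ≤ w → bphi (-μ) t ≠ 0) (z : ℝ) (hz0 : 0 ≤ z) (hzw : z ≤ w) :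
    w ^ μ * bphi μ w * bphi (-μ - 1) z + bphi (-μ) w * (z ^ (μ + 1) * bphi (μ + 1) z) ≤ 0 := by
  have hn : NonInt (-μ) := h.neg
  have hp : NonInt (μ + 1) := by simpa using h.add 1
  have hm : NonInt (-μ - 1) := by simpa [sub_eq_add_neg] using hn.add (-1)
  -- positivity of a
  have ha0 : 0 < bphi (-μ) 0 := by
    rw [bphi_zero, neg_add_eq_sub]; positivity
  have ha : ∀ t ∈ Set.Icc 0 w, 0 < bphi (-μ) t := by
    intro t ht
    by_contra hneg
    push Not at hneg
    obtain ⟨c, hc, hc0⟩ := intermediate_value_Icc' ht.1 (bphi_cont hn).continuousOn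
      ⟨hneg, ha0.le⟩
    rcases hc.1.eq_or_lt with h0 | h0
    · rw [← h0] at hc0; linarith
    · exact hz c h0 (hc.2.trans ht.2) hc0
  set B : ℝ → ℝ := fun t => t ^ μ * bphi μ t with hB
  have hBc : Continuous B := (Real.continuous_rpow_const hμ.le).mul (bphi_cont h)
  have hBd : ∀ t, 0 < t → HasDerivAt B (t ^ (μ - 1) * bphi (μ - 1) t) t := by
    intro t ht
    refine ((Real.hasDerivAt_rpow_const (Or.inl ht.ne')).mul (bphi_hasDerivAt h t)).congr_deriv ?_
    have : t ^ μ = t ^ (μ - 1) * t := by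
      rw [← Real.rpow_add_one ht.ne']; congr 1; ring
    rw [this, bphi_rec h]; ring
  have hmono : MonotoneOn (fun t => B t / bphi (-μ) t) (Set.Icc 0 w) := by
    have hder : ∀ t ∈ interior (Set.Icc 0 w), HasDerivAt (fun t => B t / bphi (-μ) t)
        ((t ^ (μ - 1) * ((Real.Gamma μ)⁻¹ * (Real.Gamma (1 - μ))⁻¹)) / bphi (-μ) t ^ 2) t := by
      intro t ht
      rw [interior_Icc] at ht
      have hat := ha t ⟨ht.1.le, ht.2.le⟩
      refine ((hBd t ht.1).div (bphi_hasDerivAt hn t) hat.ne').congr_deriv ?_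
      congr 1
      rw [← wronsk h t, hB]
      have : t ^ μ = t ^ (μ - 1) * t := by
        rw [← Real.rpow_add_one ht.1.ne']; congr 1; ring
      simp only [this, neg_add_eq_sub]
      ring
    apply monotoneOn_of_deriv_nonneg (convex_Icc 0 w)
    · exact hBc.continuousOn.div (bphi_cont hn).continuousOn fun t ht => (ha t ht).ne'
    · exact fun t ht => (hder t ht).differentiableAt.differentiableWithinAt
    · intro t ht
      rw [(hder t ht).deriv]
      rw [interior_Icc] at ht
      have := Real.Gamma_pos_of_pos hμ
      have := ht.1
      positivity
  have hw1 : w ∈ Set.Icc 0 w := ⟨hw.le, le_rfl⟩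
  have hB0 : B 0 = 0 := by simp [hB, Real.zero_rpow hμ.ne']
  have hBw : 0 ≤ B w := by
    have := hmono (⟨le_rfl, hw.le⟩ : (0 : ℝ) ∈ Set.Icc 0 w) hw1 hw.le
    simp only [hB0, zero_div] at this
    have h2 := mul_nonneg this (ha w hw1).le
    rwa [div_mul_cancel₀ _ (ha w hw1).ne'] at h2
  set K : ℝ → ℝ := fun z => B w * bphi (-μ - 1) z + bphi (-μ) w * (z ^ (μ + 1) * bphi (μ + 1) z)
    with hK
  have hKc : Continuous K := ((bphi_cont hm).const_mul _).add
    (((Real.continuous_rpow_const (by linarith)).mul (bphi_cont hp)).const_mul _)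
  have hKd : ∀ t, 0 < t → HasDerivAt K (-(B w * bphi (-μ) t) + bphi (-μ) w * B t) t := by
    intro t ht
    refine (((bphi_hasDerivAt hm t).const_mul (B w)).add
      (((Real.hasDerivAt_rpow_const (Or.inl ht.ne')).mul
        (bphi_hasDerivAt hp t)).const_mul (bphi (-μ) w))).congr_deriv ?_
    have e := bphi_rec hp t
    rw [show μ + 1 - 1 = μ by ring] at e
    rw [show μ + 1 - 1 = μ by ring, show -μ - 1 + 1 = -μ by ring, Real.rpow_add_one ht.ne']
    simp only [hB, e]
    ring
  have hanti : AntitoneOn K (Set.Icc 0 w) := by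
    apply antitoneOn_of_deriv_nonpos (convex_Icc 0 w) hKc.continuousOn
    · intro t ht
      rw [interior_Icc] at ht
      exact (hKd t ht.1).differentiableAt.differentiableWithinAt
    · intro t ht
      rw [interior_Icc] at ht
      rw [(hKd t ht.1).deriv]
      have ht' : t ∈ Set.Icc 0 w := ⟨ht.1.le, ht.2.le⟩
      have := hmono ht' hw1 ht.2.le
      simp only at this
      rw [div_le_div_iff₀ (ha t ht') (ha w hw1)] at this
      linarith
  have hK0 : K 0 ≤ 0 := by
    have hg : Real.Gamma (1 - μ) = -μ * Real.Gamma (-μ) := by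
      rw [← Real.Gamma_add_one (by linarith : -μ ≠ 0), neg_add_eq_sub]
    have hneg : Real.Gamma (-μ) < 0 := by
      by_contra hh
      push Not at hh
      nlinarith
    simp only [hK, Real.zero_rpow (by linarith : μ + 1 ≠ 0), zero_mul, mul_zero, add_zero,
      bphi_zero, sub_add_cancel]
    exact mul_nonpos_of_nonneg_of_nonpos hBw (inv_nonpos.2 hneg.le)
  exact (hanti ⟨le_rfl, hw.le⟩ ⟨hz0, hzw⟩ hz0).trans hK0

/-- **Key inequality for Lemma 3.1.** For `α ∈ (4n−3, 4n−1)`, `ν = (1−α)/2` and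
`0 < λ < j²_{ν,1}`, one has
`J_{−ν}(s₀√λ)·J_{ν−1}(r√λ) + J_ν(s₀√λ)·J_{1−ν}(r√λ) ≤ 0` for `0 < r ≤ s₀ ≤ 1`. -/
theorem besselJ_derivative_combination_nonpos (n : ℕ) (hn : 1 ≤ n) (α lam ν : ℝ)
    (hα1 : 4 * (n : ℝ) - 3 < α) (hα2 : α < 4 * (n : ℝ) - 1)
    (hν : ν = (1 - α) / 2)
    (hlam : 0 < lam)
    (hzero : ∀ t : ℝ, 0 < t → t ≤ Real.sqrt lam → besselJ ν t ≠ 0) :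
    ∀ r s₀ : ℝ, 0 < r → r ≤ s₀ → s₀ ≤ 1 →
      besselJ (-ν) (s₀ * Real.sqrt lam) * besselJ (ν - 1) (r * Real.sqrt lam)
        + besselJ ν (s₀ * Real.sqrt lam) * besselJ (1 - ν) (r * Real.sqrt lam) ≤ 0 := by
  intro r s hr hrs hs
  set q := Real.sqrt lam with hq
  have hqpos : 0 < q := Real.sqrt_pos.2 hlam
  have hs0 : 0 < s := hr.trans_le hrs
  obtain ⟨μ, rfl⟩ : ∃ μ, ν = -μ := ⟨-ν, by ring⟩
  have hn' : (1 : ℝ) ≤ n := by exact_mod_cast hn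
  have hμ1 : 2 * (n : ℝ) - 2 < μ := by linarith
  have hμ2 : μ < 2 * (n : ℝ) - 1 := by linarith
  have hμ : 0 < μ := by linarith
  have hN : NonInt μ := by
    intro k hk
    rw [hk] at hμ1 hμ2
    have a1 : 2 * (n : ℤ) - 2 < k := by exact_mod_cast hμ1
    have a2 : k < 2 * (n : ℤ) - 1 := by exact_mod_cast hμ2
    omega
  have hG : 0 < Real.Gamma (1 - μ) := by
    have e := Real.Gamma_mul_Gamma_one_sub μ
    have hsin : 0 < Real.sin (Real.pi * μ) := by
      have e2 : Real.sin (Real.pi * μ) = Real.sin (Real.pi * (μ - (2 * n - 2))) := by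
        have := Real.sin_sub_nat_mul_two_pi (Real.pi * μ) (n - 1)
        rw [← this]
        push_cast [Nat.cast_sub hn]
        congr 1; ring
      rw [e2]
      have hpi := Real.pi_pos
      apply Real.sin_pos_of_pos_of_lt_pi
      · exact mul_pos hpi (by linarith)
      · nlinarith
    have hg := Real.Gamma_pos_of_pos hμ
    have : 0 < Real.Gamma μ * Real.Gamma (1 - μ) := by
      rw [e]; exact div_pos Real.pi_pos hsin
    exact (pos_iff_pos_of_mul_pos this).1 hg
  have hX : 0 < s * q := by positivity
  have hY : 0 < r * q := by positivity
  set X := s * q / 2 with hXd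
  set Y := r * q / 2 with hYd
  have hX0 : 0 < X := by positivity
  have hY0 : 0 < Y := by positivity
  have hYX : Y ≤ X := by rw [hXd, hYd]; gcongr
  have hXq : 2 * X ≤ q := by rw [hXd]; nlinarith
  have key := key_ineq hN hμ hG (w := X ^ 2) (by positivity) (by
    intro t ht htw h0
    have hst : 0 < Real.sqrt t := Real.sqrt_pos.2 ht
    have hle : Real.sqrt t ≤ X := Real.sqrt_le_iff.2 ⟨hX0.le, htw⟩
    apply hzero (2 * Real.sqrt t) (by positivity) (by linarith)
    rw [besselJ_eq _ _ (by positivity), mul_div_cancel_left₀ _ two_ne_zero, Real.sq_sqrt ht.le, h0,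
      mul_zero]) (Y ^ 2) (by positivity) (by gcongr)
  rw [besselJ_eq _ _ hX, besselJ_eq _ _ hX, besselJ_eq _ _ hY, besselJ_eq _ _ hY, ← hXd, ← hYd,
    neg_neg, show 1 - -μ = μ + 1 by ring]
  have hXm : (X ^ 2) ^ μ = X ^ μ * X ^ μ := by
    rw [pow_two, Real.mul_rpow hX0.le hX0.le]
  have hYm : (Y ^ 2) ^ (μ + 1) = Y ^ (μ + 1) * Y ^ (μ + 1) := by
    rw [pow_two, Real.mul_rpow hY0.le hY0.le]
  rw [hXm, hYm] at key
  have e1 : X ^ (-μ) = (X ^ μ)⁻¹ := Real.rpow_neg hX0.le μ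
  have e2 : Y ^ (-μ - 1) = (Y ^ (μ + 1))⁻¹ := by
    rw [← Real.rpow_neg hY0.le]; congr 1; ring
  have p1 : 0 < X ^ μ := Real.rpow_pos_of_pos hX0 _
  have p2 : 0 < Y ^ (μ + 1) := Real.rpow_pos_of_pos hY0 _
  rw [e1, e2]
  have := mul_nonpos_of_nonneg_of_nonpos (by positivity : 0 ≤ (X ^ μ)⁻¹ * (Y ^ (μ + 1))⁻¹) key
  refine le_of_eq_of_le ?_ this
  field_simp
end
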